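/- For any graph G on n vertices and odd integers k ≥ t ≥ 1, t(P_k; G)^t ≥ t(P_t; G)^k, where t(F;G) = |Hom(F;G)|/n^{|V(F)|} is the homomorphism density. -/

import Mathlib

/-- The number of graph homomorphisms from `F` to `G`. -/
noncomputable def homCount {α β : Type*} (F : SimpleGraph α) (G : SimpleGraph β) : ℕ :=
  Nat.card (F →g G)

/-- The homomorphism density `t(F;G) = |Hom(F;G)| / |V(G)|^{|V(F)|}`. -/
noncomputable def homDensity {α β : Type*} [Fintype α] [Fintype β]
    (F : SimpleGraph α) (G : SimpleGraph β) : ℝ :=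
  (homCount F G : ℝ) / (Fintype.card β : ℝ) ^ (Fintype.card α)

open Finset in
/-- The Gibbs inequality, in its unnormalised form. -/
theorem sum_mul_log_sub_log_le {ι : Type*} (s : Finset ι) (a b : ι → ℝ)
    (ha : ∀ i ∈ s, 0 ≤ a i) (hb : ∀ i ∈ s, 0 ≤ b i) (hab : ∀ i ∈ s, 0 < a i → 0 < b i)
    (hA : 0 < ∑ i ∈ s, a i) :
    0 < ∑ i ∈ s, b i ∧
      ∑ i ∈ s, a i * (Real.log (b i) - Real.log (a i)) ≤
        (∑ i ∈ s, a i) * (Real.log (∑ i ∈ s, b i) - Real.log (∑ i ∈ s, a i)) := by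
  have hB : 0 < ∑ i ∈ s, b i := by
    obtain ⟨i, hi, hai⟩ : ∃ i ∈ s, 0 < a i := by
      by_contra! h
      exact absurd (sum_nonpos h) (not_le.mpr hA)
    exact sum_pos' hb ⟨i, hi, hab i hi hai⟩
  refine ⟨hB, ?_⟩
  set A := ∑ i ∈ s, a i with hAdef
  set B := ∑ i ∈ s, b i with hBdef
  have key : ∀ i ∈ s, a i * (Real.log (b i) - Real.log (a i)) ≤
      a i * (Real.log B - Real.log A) + (b i * (A / B) - a i) := by
    intro i hi
    rcases (ha i hi).eq_or_lt with h0 | hpos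
    · rw [← h0]
      have := mul_nonneg (hb i hi) (div_pos hA hB).le
      linarith
    · have hbi := hab i hi hpos
      have hlog := Real.log_le_sub_one_of_pos
        (div_pos (mul_pos hbi hA) (mul_pos hpos hB))
      rw [Real.log_div (by positivity) (by positivity), Real.log_mul hbi.ne' hA.ne',
        Real.log_mul hpos.ne' hB.ne'] at hlog
      have hmul := mul_le_mul_of_nonneg_left hlog hpos.le
      have heq : a i * (b i * A / (a i * B) - 1) = b i * (A / B) - a i := by
        field_simp
      linarith
  calc _ ≤ ∑ i ∈ s, (a i * (Real.log B - Real.log A) + (b i * (A / B) - a i)) := sum_le_sum key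
    _ = A * (Real.log B - Real.log A) + (B * (A / B) - A) := by
      rw [sum_add_distrib, sum_sub_distrib, ← sum_mul, ← sum_mul]
    _ = _ := by rw [mul_div_cancel₀ _ hB.ne']; ring

section WeightedWalks

variable {V : Type*} [Fintype V] (A : V → V → ℝ)

/-- The total weight of the walks with `j` steps starting at a vertex. -/
def walkWeight : ℕ → V → ℝ
  | 0, _ => 1
  | j + 1, v => ∑ u, A v u * walkWeight j u

/-- The total weight of the walks with `j` steps. -/
def totalWalkWeight (j : ℕ) : ℝ := ∑ v, walkWeight A j v

variable {A}

theorem walkWeight_nonneg (hA : ∀ u v, 0 ≤ A u v) (j : ℕ) (v : V) : 0 ≤ walkWeight A j v := by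
  induction j generalizing v with
  | zero => exact zero_le_one
  | succ j ih => exact Finset.sum_nonneg fun u _ => mul_nonneg (hA v u) (ih u)

theorem walkWeight_pos (hA : ∀ u v, 0 ≤ A u v) (hsymm : ∀ u v, A u v = A v u) (j : ℕ) {u v : V}
    (huv : 0 < A u v) : 0 < walkWeight A j u := by
  induction j generalizing u v with
  | zero => exact zero_lt_one
  | succ j ih =>
    exact Finset.sum_pos' (fun w _ => mul_nonneg (hA u w) (walkWeight_nonneg hA j w))
      ⟨v, Finset.mem_univ v, mul_pos huv (ih (hsymm u v ▸ huv))⟩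

theorem sum_walkWeight_mul_succ (i j : ℕ) :
    ∑ p : V × V, A p.1 p.2 * (walkWeight A i p.1 * walkWeight A j p.2) =
      ∑ v, walkWeight A i v * walkWeight A (j + 1) v := by
  rw [Fintype.sum_prod_type]
  refine Finset.sum_congr rfl fun v _ => ?_
  rw [walkWeight, Finset.mul_sum]
  exact Finset.sum_congr rfl fun u _ => by ring

theorem sum_walkWeight_succ_mul (hsymm : ∀ u v, A u v = A v u) (i j : ℕ) :
    ∑ p : V × V, A p.1 p.2 * (walkWeight A i p.1 * walkWeight A j p.2) =
      ∑ v, walkWeight A (i + 1) v * walkWeight A j v := by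
  rw [Fintype.sum_prod_type, Finset.sum_comm]
  refine Finset.sum_congr rfl fun v _ => ?_
  rw [walkWeight, Finset.sum_mul]
  exact Finset.sum_congr rfl fun u _ => by rw [hsymm u v]; ring

theorem sum_walkWeight_mul (hsymm : ∀ u v, A u v = A v u) (i j : ℕ) :
    ∑ v, walkWeight A i v * walkWeight A j v = totalWalkWeight A (i + j) := by
  induction i generalizing j with
  | zero => simp [walkWeight, totalWalkWeight]
  | succ i ih =>
    rw [← sum_walkWeight_succ_mul hsymm, sum_walkWeight_mul_succ, ih]
    congr 1
    omega

theorem sum_edge_walkWeight (hsymm : ∀ u v, A u v = A v u) (i j : ℕ) :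
    ∑ p : V × V, A p.1 p.2 * (walkWeight A i p.1 * walkWeight A j p.2) =
      totalWalkWeight A (i + j + 1) := by
  rw [sum_walkWeight_mul_succ, sum_walkWeight_mul hsymm]
  rfl

/-- Under the walk measure with `i + j` steps, the unnormalised mean of the log-ratio between
the weights of the two pieces into which the `i`-th vertex cuts the walk. -/
noncomputable def walkLogRatio (A : V → V → ℝ) (i j : ℕ) : ℝ :=
  ∑ v, walkWeight A i v * walkWeight A j v *
    (Real.log (walkWeight A i v) - Real.log (walkWeight A j v))

theorem walkLogRatio_swap (i j : ℕ) : walkLogRatio A j i = -walkLogRatio A i j := by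
  rw [walkLogRatio, walkLogRatio, ← Finset.sum_neg_distrib]
  exact Finset.sum_congr rfl fun v _ => by ring

/-- Tripling one edge of a random walk bounds the growth of the number of walks from below. -/
theorem walkLogRatio_sub_le (hA : ∀ u v, 0 ≤ A u v) (hsymm : ∀ u v, A u v = A v u) (i j : ℕ)
    (hpos : 0 < totalWalkWeight A (i + j + 1)) :
    0 < totalWalkWeight A (i + j + 3) ∧
      walkLogRatio A (i + 1) j - walkLogRatio A i (j + 1) ≤
        totalWalkWeight A (i + j + 1) *
          (Real.log (totalWalkWeight A (i + j + 3)) -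
            Real.log (totalWalkWeight A (i + j + 1))) := by
  have hnn := walkWeight_nonneg hA
  have hsum : ∑ p : V × V, A p.1 p.2 * (walkWeight A j p.1 * walkWeight A i p.2) =
      totalWalkWeight A (i + j + 1) := by
    rw [sum_edge_walkWeight hsymm, add_comm j i]
  have hsum' :
      ∑ p : V × V, A p.1 p.2 * (walkWeight A (i + 1) p.1 * walkWeight A (j + 1) p.2) =
        totalWalkWeight A (i + j + 3) := by
    rw [sum_edge_walkWeight hsymm]
    congr 1
    omega
  have gibbs := sum_mul_log_sub_log_le Finset.univ
    (fun p : V × V => A p.1 p.2 * (walkWeight A j p.1 * walkWeight A i p.2))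
    (fun p => A p.1 p.2 * (walkWeight A (i + 1) p.1 * walkWeight A (j + 1) p.2))
    (fun p _ => mul_nonneg (hA _ _) (mul_nonneg (hnn _ _) (hnn _ _)))
    (fun p _ => mul_nonneg (hA _ _) (mul_nonneg (hnn _ _) (hnn _ _)))
    (fun p _ h => by
      have hp : 0 < A p.1 p.2 := pos_of_mul_pos_left h (mul_nonneg (hnn _ _) (hnn _ _))
      exact mul_pos hp (mul_pos (walkWeight_pos hA hsymm _ hp)
        (walkWeight_pos hA hsymm _ (hsymm p.1 p.2 ▸ hp))))
    (by rw [hsum]; exact hpos)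
  rw [hsum, hsum'] at gibbs
  refine ⟨gibbs.1, le_of_eq_of_le ?_ gibbs.2⟩
  have expand : ∀ p : V × V,
      A p.1 p.2 * (walkWeight A j p.1 * walkWeight A i p.2) *
        (Real.log (A p.1 p.2 * (walkWeight A (i + 1) p.1 * walkWeight A (j + 1) p.2)) -
          Real.log (A p.1 p.2 * (walkWeight A j p.1 * walkWeight A i p.2))) =
      A p.1 p.2 * walkWeight A i p.2 * (walkWeight A j p.1 *
          (Real.log (walkWeight A (i + 1) p.1) - Real.log (walkWeight A j p.1))) -
        A p.1 p.2 * walkWeight A j p.1 * (walkWeight A i p.2 *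
          (Real.log (walkWeight A i p.2) - Real.log (walkWeight A (j + 1) p.2))) := by
    intro p
    rcases (hA p.1 p.2).eq_or_lt with h0 | hp
    · simp [← h0]
    · have h₁ := fun m => (walkWeight_pos hA hsymm m hp).ne'
      have h₂ := fun m => (walkWeight_pos hA hsymm m (hsymm p.1 p.2 ▸ hp)).ne'
      rw [Real.log_mul hp.ne' (mul_ne_zero (h₁ _) (h₂ _)), Real.log_mul (h₁ _) (h₂ _),
        Real.log_mul hp.ne' (mul_ne_zero (h₁ _) (h₂ _)), Real.log_mul (h₁ _) (h₂ _)]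
      ring
  rw [Finset.sum_congr rfl fun p _ => expand p, Finset.sum_sub_distrib]
  congr 1
  · rw [Fintype.sum_prod_type, walkLogRatio]
    refine Finset.sum_congr rfl fun v _ => ?_
    dsimp only
    rw [← Finset.sum_mul, mul_assoc]
    rfl
  · rw [Fintype.sum_prod_type, Finset.sum_comm, walkLogRatio]
    refine Finset.sum_congr rfl fun v _ => ?_
    dsimp only
    rw [← Finset.sum_mul, mul_comm (walkWeight A i v), mul_assoc, walkWeight]
    simp only [hsymm v]

theorem mul_log_totalWalkWeight_le_walkLogRatio (hA : ∀ u v, 0 ≤ A u v) (t : ℕ)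
    (hpos : 0 < totalWalkWeight A t) :
    totalWalkWeight A t * (Real.log (totalWalkWeight A t) - Real.log (Fintype.card V)) ≤
      walkLogRatio A t 0 := by
  have gibbs := (sum_mul_log_sub_log_le Finset.univ (walkWeight A t) (fun _ => 1)
    (fun v _ => walkWeight_nonneg hA t v) (fun _ _ => zero_le_one) (fun _ _ _ => zero_lt_one)
    hpos).2
  have hratio : walkLogRatio A t 0 =
      -∑ v, walkWeight A t v * (Real.log 1 - Real.log (walkWeight A t v)) := by
    rw [walkLogRatio, ← Finset.sum_neg_distrib]
    exact Finset.sum_congr rfl fun v _ => by rw [walkWeight.eq_1]; ring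
  rw [hratio]
  simp only [Finset.sum_const, Finset.card_univ, nsmul_eq_mul, mul_one] at gibbs
  change _ ≤ totalWalkWeight A t * (_ - Real.log (totalWalkWeight A t)) at gibbs
  linarith

theorem log_totalWalkWeight_add_two (hA : ∀ u v, 0 ≤ A u v) (hsymm : ∀ u v, A u v = A v u)
    {t : ℕ} (ht : 1 ≤ t) (hpos : 0 < totalWalkWeight A t) :
    0 < totalWalkWeight A (t + 2) ∧
      2 * (Real.log (totalWalkWeight A t) - Real.log (Fintype.card V)) ≤
        t * (Real.log (totalWalkWeight A (t + 2)) - Real.log (totalWalkWeight A t)) := by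
  have step : ∀ i < t, 0 < totalWalkWeight A (t + 2) ∧
      walkLogRatio A (i + 1) (t - (i + 1)) - walkLogRatio A i (t - i) ≤
        totalWalkWeight A t *
          (Real.log (totalWalkWeight A (t + 2)) - Real.log (totalWalkWeight A t)) := by
    intro i hi
    obtain ⟨j, rfl⟩ : ∃ j, t = i + j + 1 := ⟨t - i - 1, by omega⟩
    have h := walkLogRatio_sub_le hA hsymm i j hpos
    rwa [show i + j + 1 - (i + 1) = j by omega, show i + j + 1 - i = j + 1 by omega]
  refine ⟨(step 0 ht).1, ?_⟩
  have htel := Finset.sum_le_sum fun i hi => (step i (Finset.mem_range.mp hi)).2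
  rw [Finset.sum_range_sub (fun i => walkLogRatio A i (t - i)), Nat.sub_self, Nat.sub_zero,
    walkLogRatio_swap t 0, Finset.sum_const, Finset.card_range, nsmul_eq_mul] at htel
  have hend := mul_log_totalWalkWeight_le_walkLogRatio hA t hpos
  refine le_of_mul_le_mul_left ?_ hpos
  linarith

/-- The normalised logarithm of the number of walks grows superlinearly along steps of two. -/
theorem log_totalWalkWeight_add_two_mul (hA : ∀ u v, 0 ≤ A u v)
    (hsymm : ∀ u v, A u v = A v u) {t : ℕ} (ht : 1 ≤ t) (hpos : 0 < totalWalkWeight A t) (m : ℕ) :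
    0 < totalWalkWeight A (t + 2 * m) ∧
      ((t + 2 * m : ℕ) : ℝ) * (Real.log (totalWalkWeight A t) - Real.log (Fintype.card V)) ≤
        t * (Real.log (totalWalkWeight A (t + 2 * m)) - Real.log (Fintype.card V)) := by
  induction m with
  | zero => exact ⟨hpos, le_rfl⟩
  | succ m ih =>
    obtain ⟨hk, ih⟩ := ih
    obtain ⟨hk', hstep⟩ := log_totalWalkWeight_add_two hA hsymm (by omega) hk
    rw [show t + 2 * (m + 1) = t + 2 * m + 2 by ring]
    refine ⟨hk', ?_⟩
    set k := t + 2 * m with hkdef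
    have hkpos : (0 : ℝ) < k := by exact_mod_cast (by omega : 0 < k)
    have h₁ := mul_le_mul_of_nonneg_left hstep (Nat.cast_nonneg (α := ℝ) t)
    have h₂ := mul_le_mul_of_nonneg_left ih (by positivity : (0 : ℝ) ≤ k + 2)
    refine le_of_mul_le_mul_left ?_ hkpos
    push_cast
    linarith

theorem sum_prod_cons_eq_walkWeight (j : ℕ) (v : V) :
    ∑ φ : Fin j → V, ∏ i : Fin j,
      A (Fin.cons (α := fun _ => V) v φ i.castSucc) (Fin.cons (α := fun _ => V) v φ i.succ) =
        walkWeight A j v := by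
  induction j generalizing v with
  | zero => simp [walkWeight]
  | succ j ih =>
    rw [← (Fin.consEquiv fun _ : Fin (j + 1) => V).sum_comp, Fintype.sum_prod_type, walkWeight]
    refine Finset.sum_congr rfl fun u _ => ?_
    rw [← ih u, Finset.mul_sum]
    refine Finset.sum_congr rfl fun φ _ => ?_
    rw [Fin.prod_univ_succ]
    rfl

theorem sum_prod_eq_totalWalkWeight (j : ℕ) :
    ∑ φ : Fin (j + 1) → V, ∏ i : Fin j, A (φ i.castSucc) (φ i.succ) = totalWalkWeight A j := by
  rw [← (Fin.consEquiv fun _ : Fin (j + 1) => V).sum_comp, Fintype.sum_prod_type, totalWalkWeight]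
  exact Finset.sum_congr rfl fun v _ => sum_prod_cons_eq_walkWeight j v

end WeightedWalks

/-- Homomorphisms from a path are sequences of consecutively adjacent vertices. -/
def pathGraphHomEquiv {V : Type*} (G : SimpleGraph V) (j : ℕ) :
    (SimpleGraph.pathGraph (j + 1) →g G) ≃
      {φ : Fin (j + 1) → V // ∀ i : Fin j, G.Adj (φ i.castSucc) (φ i.succ)} where
  toFun f := ⟨f, fun i => f.map_rel (by simp [SimpleGraph.pathGraph_adj])⟩
  invFun φ := ⟨φ.1, by
    have key : ∀ a b : Fin (j + 1), a.val + 1 = b.val → G.Adj (φ.1 a) (φ.1 b) := by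
      intro a b h
      have ha : a.val < j := by omega
      rw [show b = Fin.succ ⟨a.val, ha⟩ from Fin.ext h.symm]
      exact φ.2 ⟨a.val, ha⟩
    intro a b hab
    rcases SimpleGraph.pathGraph_adj.mp hab with h | h
    · exact key a b h
    · exact (key b a h).symm⟩
  left_inv _ := rfl
  right_inv _ := rfl

open Classical in
theorem homCount_pathGraph {V : Type*} [Fintype V] (G : SimpleGraph V) (j : ℕ) :
    (homCount (SimpleGraph.pathGraph (j + 1)) G : ℝ) =
      totalWalkWeight (fun u v => if G.Adj u v then (1 : ℝ) else 0) j := by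
  rw [homCount, Nat.card_congr (pathGraphHomEquiv G j), Nat.card_eq_fintype_card,
    Fintype.card_subtype, ← sum_prod_eq_totalWalkWeight, Finset.card_filter]
  push_cast
  refine Finset.sum_congr rfl fun φ _ => ?_
  rw [Finset.prod_ite_zero]
  simp

/-- For odd `k ≥ t ≥ 1`, `t(P_k; G)^t ≥ t(P_t; G)^k`, where the path with `j`
edges is `SimpleGraph.pathGraph (j+1)`. -/
theorem es_density (n k t : ℕ) (G : SimpleGraph (Fin n))
    (hk : Odd k) (ht : Odd t) (ht1 : 1 ≤ t) (htk : t ≤ k) :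
    homDensity (SimpleGraph.pathGraph (k + 1)) G ^ t ≥
      homDensity (SimpleGraph.pathGraph (t + 1)) G ^ k := by
  classical
  obtain ⟨m, rfl⟩ : ∃ m, k = t + 2 * m := by
    obtain ⟨a, rfl⟩ := hk
    obtain ⟨b, rfl⟩ := ht
    exact ⟨a - b, by omega⟩
  simp only [homDensity, homCount_pathGraph, Fintype.card_fin]
  set A : Fin n → Fin n → ℝ := fun u v => if G.Adj u v then 1 else 0 with hAdef
  have hA : ∀ u v, 0 ≤ A u v := fun u v => by
    simp only [hAdef]
    split_ifs <;> norm_num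
  have hsymm : ∀ u v, A u v = A v u := fun u v => by simp only [hAdef, G.adj_comm]
  have hnonneg : ∀ j, 0 ≤ totalWalkWeight A j := fun j =>
    Finset.sum_nonneg fun v _ => walkWeight_nonneg hA j v
  rcases (hnonneg t).eq_or_lt with h0 | hpos
  · rw [← h0, zero_div, zero_pow (by omega)]
    exact pow_nonneg (div_nonneg (hnonneg _) (by positivity)) _
  · have hn : (0 : ℝ) < n := by
      rcases Nat.eq_zero_or_pos n with rfl | h
      · simp [totalWalkWeight] at hpos
      · exact_mod_cast h
    obtain ⟨hkpos, hlog⟩ := log_totalWalkWeight_add_two_mul hA hsymm ht1 hpos m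
    rw [Fintype.card_fin] at hlog
    rw [ge_iff_le, ← Real.log_le_log_iff (by positivity) (by positivity), Real.log_pow,
      Real.log_pow, Real.log_div hpos.ne' (by positivity), Real.log_div hkpos.ne' (by positivity),
      Real.log_pow, Real.log_pow]
    push_cast at hlog ⊢
    linarith
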